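/- For every integer k ≥ 3 and every even integer n ≥ 12, there exist a graph G obtained from the complete graph on 5n/2 + k − 7 vertices by adding one new vertex w adjacent to exactly 2n + k − 6 of these vertices, and an edge k-coloring of G with no rainbow triangle and no monochromatic copy of K^+_{1,n}. Consequently the star-critical Gallai–Ramsey number satisfies GR*_k(K^+_{1,n}) ≥ 2n + k − 5. -/

import Mathlib

open SimpleGraph

/-- A monochromatic copy of `H` in the graph `G` edge-colored by `c`:
an injective map sending edges of `H` to edges of `G`, all image edges of one color. -/
def IsMonoCopy {α V : Type*} {k : ℕ} (G : SimpleGraph V) (c : V → V → Fin k)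
    (H : SimpleGraph α) : Prop :=
  ∃ (f : α → V) (i : Fin k), Function.Injective f ∧
    ∀ a b, H.Adj a b → G.Adj (f a) (f b) ∧ c (f a) (f b) = i

/-- The edge coloring `c` of `G` has no rainbow triangle. -/
def NoRainbowTriangle {V : Type*} {k : ℕ} (G : SimpleGraph V) (c : V → V → Fin k) : Prop :=
  ¬ ∃ x y z : V, G.Adj x y ∧ G.Adj y z ∧ G.Adj x z ∧
    c x y ≠ c y z ∧ c y z ≠ c x z ∧ c x y ≠ c x z

/-- The Gallai–Ramsey number `GR_k(H)`: the least `N` such that every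
rainbow-triangle-free `k`-edge-coloring of the complete graph on `N` vertices
contains a monochromatic copy of `H`. -/
noncomputable def GallaiRamsey (k : ℕ) {α : Type*} (H : SimpleGraph α) : ℕ :=
  sInf {N | ∀ c : Fin N → Fin N → Fin k, (∀ x y, c x y = c y x) →
    NoRainbowTriangle (⊤ : SimpleGraph (Fin N)) c →
    IsMonoCopy (⊤ : SimpleGraph (Fin N)) c H}

/-- The diagonal two-color Ramsey number `R(H, H)`. -/
noncomputable def Ramsey2 {α : Type*} (H : SimpleGraph α) : ℕ :=
  sInf {N | ∀ c : Fin N → Fin N → Fin 2, (∀ x y, c x y = c y x) →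
    IsMonoCopy (⊤ : SimpleGraph (Fin N)) c H}

/-- The fan `F_3 = K_1 + 3K_2`: vertex `0` is the center, joined to all other
vertices, together with the three disjoint edges `12`, `34`, `56`. -/
def fanF3 : SimpleGraph (Fin 7) :=
  SimpleGraph.fromRel (fun a b => a = 0 ∨ (a.val % 2 = 1 ∧ b.val = a.val + 1))

/-- The kipas `K̂_m = K_1 + P_m`: vertex `0` is the center, joined to all other
vertices, and `1, 2, …, m` form a path. -/
def kipasG (m : ℕ) : SimpleGraph (Fin (m + 1)) :=
  SimpleGraph.fromRel (fun a b => a = 0 ∨ (1 ≤ a.val ∧ b.val = a.val + 1))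

/-- The wheel `W_m = K_1 + C_m`: vertex `0` is the center, joined to all other
vertices, and `1, 2, …, m` form a cycle. -/
def wheelG (m : ℕ) : SimpleGraph (Fin (m + 1)) :=
  SimpleGraph.fromRel (fun a b =>
    a = 0 ∨ (1 ≤ a.val ∧ b.val = a.val + 1) ∨ (a.val = m ∧ b.val = 1))

/-- The star `K_{1,n}`: vertex `0` is the center, joined to all other vertices. -/
def starG (n : ℕ) : SimpleGraph (Fin (n + 1)) :=
  SimpleGraph.fromRel (fun a _ => a = 0)

/-- `K⁺_{1,n}`, the star `K_{1,n}` with one edge subdivided: vertex `0` is joined to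
`1, …, n`, and the extra vertex `n+1` is joined to `n`. -/
def starPlusG (n : ℕ) : SimpleGraph (Fin (n + 2)) :=
  SimpleGraph.fromRel (fun a b => (a = 0 ∧ b.val ≤ n) ∨ (a.val = n ∧ b.val = n + 1))

/-- The complete graph on `Fin N` with the single edge `{0, 1}` deleted. -/
def compMinusEdge (N : ℕ) : SimpleGraph (Fin N) where
  Adj x y := x ≠ y ∧ ¬(x.val = 0 ∧ y.val = 1) ∧ ¬(x.val = 1 ∧ y.val = 0)
  symm := by
    refine ⟨?_⟩
    intro x y h
    exact ⟨h.1.symm, fun hc => h.2.2 ⟨hc.2, hc.1⟩, fun hc => h.2.1 ⟨hc.2, hc.1⟩⟩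
  loopless := by refine ⟨?_⟩; intro x h; exact h.1 rfl

/-- The complete graph on `Fin M` together with one extra vertex (`none`)
joined exactly to the vertices of `A`. -/
def addVertex (M : ℕ) (A : Set (Fin M)) : SimpleGraph (Option (Fin M)) where
  Adj x y := (∃ a b : Fin M, x = some a ∧ y = some b ∧ a ≠ b) ∨
    (∃ a ∈ A, (x = some a ∧ y = none) ∨ (x = none ∧ y = some a))
  symm := by
    refine ⟨?_⟩
    rintro x y (⟨a, b, hx, hy, hab⟩ | ⟨a, ha, (⟨hx, hy⟩ | ⟨hx, hy⟩)⟩)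
    · exact Or.inl ⟨b, a, hy, hx, hab.symm⟩
    · exact Or.inr ⟨a, ha, Or.inr ⟨hy, hx⟩⟩
    · exact Or.inr ⟨a, ha, Or.inl ⟨hy, hx⟩⟩
  loopless := by
    refine ⟨?_⟩
    rintro x (⟨a, b, hx, hy, hab⟩ | ⟨a, ha, (⟨hx, hy⟩ | ⟨hx, hy⟩)⟩) <;> simp_all

/-- The star-critical Gallai–Ramsey number `GR*_k(H)`: the least `s` such that
every rainbow-triangle-free `k`-edge-coloring of the complete graph on
`GR_k(H) - 1` vertices plus one extra vertex joined to exactly `s` of them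
contains a monochromatic copy of `H`. -/
noncomputable def GRstar (k : ℕ) {α : Type*} (H : SimpleGraph α) : ℕ :=
  sInf {s | ∀ A : Finset (Fin (GallaiRamsey k H - 1)), A.card = s →
    ∀ c : Option (Fin (GallaiRamsey k H - 1)) → Option (Fin (GallaiRamsey k H - 1)) → Fin k,
      (∀ x y, c x y = c y x) →
      NoRainbowTriangle (addVertex (GallaiRamsey k H - 1) (↑A)) c →
      IsMonoCopy (addVertex (GallaiRamsey k H - 1) (↑A)) c H}

/-- `H` is Gallai-Ramsey-full for `k` colors: the complete graph on `GR_k(H)`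
vertices minus one edge admits a rainbow-triangle-free `k`-edge-coloring with
no monochromatic copy of `H`. -/
def GallaiRamseyFull (k : ℕ) {α : Type*} (H : SimpleGraph α) : Prop :=
  ∃ c : Fin (GallaiRamsey k H) → Fin (GallaiRamsey k H) → Fin k,
    (∀ x y, c x y = c y x) ∧
    NoRainbowTriangle (compMinusEdge (GallaiRamsey k H)) c ∧
    ¬ IsMonoCopy (compMinusEdge (GallaiRamsey k H)) c H

/-- Reachability inside the vertex set `s`: there is a walk all of whose
vertices lie in `s`. -/
def ReachableWithin {V : Type*} (R : SimpleGraph V) (s : Set V) (u v : V) : Prop :=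
  ∃ w : R.Walk u v, ∀ x ∈ w.support, x ∈ s

/-!
Write `n = 2m + 2`. Blow up the two-colored pentagon to `5m + 2` vertices, with two adjacent blocks
of size `m + 1` and three of size `m`, and use a third color inside the blocks. Only the block
opposite to the two large ones has too large a monochromatic degree, which is why one vertex of a
large block is not joined to it. Each of the remaining `k - 3` colors is used for one further
vertex, joined to everything before it: a star contains no `K⁺_{1,n}`. The vertex missing the `m`
edges is the added vertex `w`, and deleting it leaves a good coloring of `K_{5m + k - 2}`.

For the bound on `GR*_k`, it remains to see that `GR_k(K⁺_{1,n}) = 5m + k - 1`. In a Gallai coloring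
without monochromatic `K⁺_{1,n}`, a vertex with more than `n` neighbors in some color meets all
edges of that color, so it can be deleted together with the color. Otherwise, unless there are at
most `n + 1` vertices, all monochromatic degrees are at most `2m + 1`, and Gallai's partition
theorem bounds the order: two parts with more than `2m + 1` vertices together force at most
`2(2m + 1)` vertices in all, while a partition without such a pair has at most `5m + 1` vertices.
-/

/-- The graph of the edges of color `i` in an edge coloring `c` of the complete graph on `V`;
the values `c x x` are disregarded. -/
def colorGraph {V C : Type*} (c : V → V → C) (i : C) : SimpleGraph V :=
  SimpleGraph.fromRel fun x y => c x y = i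

/-- A Gallai coloring: an edge coloring of the complete graph on `V` without rainbow triangles.
The second field says that two edges of a triangle at `z` agree as soon as both differ from the
third. -/
structure IsGallaiColoring {V C : Type*} (c : V → V → C) : Prop where
  symm : ∀ x y, c x y = c y x
  eq_of_ne_of_ne : ∀ ⦃x y z⦄, x ≠ z → y ≠ z → c x z ≠ c x y → c y z ≠ c x y → c x z = c y z

/-- A Gallai partition: `p` sends each vertex to its part, any two parts are joined in a single
color, and only the colors `a` and `b` occur between distinct parts. -/
structure IsGallaiPartition {V W C : Type*} (c : V → V → C) (p : V → W) (a b : C) : Prop where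
  surjective : Function.Surjective p
  eq_of_eq : ∀ ⦃x x' y y'⦄, p x = p x' → p y = p y' → p x ≠ p y → c x y = c x' y'
  eq_or_eq : ∀ ⦃x y⦄, p x ≠ p y → c x y = a ∨ c x y = b

section Gallai

universe u

variable {V : Type u} {W C : Type*} {c : V → V → C} {i : C}

theorem colorGraph_adj (hs : ∀ x y, c x y = c y x) {x y : V} :
    (colorGraph c i).Adj x y ↔ x ≠ y ∧ c x y = i := by
  simp only [colorGraph, SimpleGraph.fromRel_adj, hs y x, or_self]

theorem comap_colorGraph {f : W → V} (hf : Function.Injective f) :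
    (colorGraph c i).comap f = colorGraph (fun x y => c (f x) (f y)) i := by
  ext x y
  simp only [colorGraph, SimpleGraph.comap_adj, SimpleGraph.fromRel_adj, hf.ne_iff]

theorem IsGallaiColoring.comap (hc : IsGallaiColoring c) {f : W → V}
    (hf : Function.Injective f) : IsGallaiColoring fun x y => c (f x) (f y) where
  symm x y := hc.symm (f x) (f y)
  eq_of_ne_of_ne _ _ _ hxz hyz := hc.eq_of_ne_of_ne (hf.ne hxz) (hf.ne hyz)

theorem IsGallaiColoring.eq_of_reachable (hc : IsGallaiColoring c) {x x' y : V}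
    (hx : (colorGraph c i).Reachable x x') (hy : ¬(colorGraph c i).Reachable x y) :
    c x y = c x' y := by
  obtain ⟨walk⟩ := hx
  induction walk with
  | nil => rfl
  | @cons u v _ huv _ ih =>
    have color_ne {z : V} (hz : ¬(colorGraph c i).Reachable z y) : z ≠ y ∧ c z y ≠ i := by
      have hzy : z ≠ y := by rintro rfl; exact hz .rfl
      exact ⟨hzy, fun h => hz ((colorGraph_adj hc.symm).2 ⟨hzy, h⟩).reachable⟩
    have hv : ¬(colorGraph c i).Reachable v y := fun h => hy (huv.reachable.trans h)
    obtain rfl := ((colorGraph_adj hc.symm).1 huv).2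
    exact (hc.eq_of_ne_of_ne (color_ne hy).1 (color_ne hv).1 (color_ne hy).2
      (color_ne hv).2).trans (ih hv)

theorem exists_adj_reachable_comap_ne {G : SimpleGraph V} {z v : V} (h : G.Reachable z v)
    (hz : z ≠ v) : ∃ z' : {x // x ≠ v}, G.Adj z' v ∧
      (G.comap ((↑) : {x // x ≠ v} → V)).Reachable ⟨z, hz⟩ z' := by
  obtain ⟨walk⟩ := h
  induction walk with
  | nil => exact absurd rfl hz
  | @cons z y v hzy _ ih =>
    rcases eq_or_ne y v with rfl | hy
    · exact ⟨⟨z, hz⟩, hzy, .rfl⟩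
    · obtain ⟨z', hz', hreach⟩ := ih hy
      have hadj : (G.comap ((↑) : {x // x ≠ v} → V)).Adj ⟨z, hz⟩ ⟨y, hy⟩ := hzy
      exact ⟨z', hz', hadj.reachable.trans hreach⟩

theorem IsGallaiColoring.eq_of_not_reachable_comap_ne (hc : IsGallaiColoring c)
    (hi : (colorGraph c i).Preconnected) {v : V} {z u : {x // x ≠ v}}
    (hzu : ¬((colorGraph c i).comap ((↑) : {x // x ≠ v} → V)).Reachable z u)
    (hu : c v u ≠ i) : c z u = c v u := by
  obtain ⟨z', hadj, hz'⟩ := exists_adj_reachable_comap_ne (hi z v) z.2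
  rw [comap_colorGraph Subtype.val_injective] at hzu hz'
  have hz'u : ¬(colorGraph (fun x y : {x // x ≠ v} => c x y) i).Reachable z' u :=
    fun h => hzu (hz'.trans h)
  have hne : z' ≠ u := by rintro rfl; exact hz'u .rfl
  have hcolor : c z' u ≠ i := fun h =>
    hz'u ((colorGraph_adj fun x y : {x // x ≠ v} => hc.symm x y).2 ⟨hne, h⟩).reachable
  obtain rfl := ((colorGraph_adj hc.symm).1 hadj).2
  calc c z u = c z' u := (hc.comap Subtype.val_injective).eq_of_reachable hz' hzu
    _ = c v u := hc.eq_of_ne_of_ne (Subtype.coe_injective.ne hne) u.2.symm hcolor hu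

/-- Were the graph disconnected, `c z u = c v u` would hold either for the edge `u₁ u₂` read in both
directions, or for a vertex `z` outside the common component of `u₁` and `u₂`, which sees both in
the same color. -/
theorem IsGallaiColoring.preconnected_comap_ne (hc : IsGallaiColoring c)
    (hi : (colorGraph c i).Preconnected) {v : V} {u₁ u₂ : {x // x ≠ v}}
    (h₁ : c v u₁ ≠ i) (h₂ : c v u₂ ≠ i) (h : c v u₁ ≠ c v u₂) :
    ((colorGraph c i).comap ((↑) : {x // x ≠ v} → V)).Preconnected := by
  set G := (colorGraph c i).comap ((↑) : {x // x ≠ v} → V) with hG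
  have color_eq {z u : {x // x ≠ v}} (hzu : ¬G.Reachable z u) (hu : c v u ≠ i) :
      c z u = c v u := hc.eq_of_not_reachable_comap_ne hi hzu hu
  have h₁₂ : G.Reachable u₁ u₂ := by
    by_contra hr
    exact h (calc c v u₁ = c u₂ u₁ := (color_eq (fun hr' => hr hr'.symm) h₁).symm
      _ = c u₁ u₂ := hc.symm _ _
      _ = c v u₂ := color_eq hr h₂)
  have reach (z : {x // x ≠ v}) : G.Reachable z u₁ := by
    by_contra hz
    have hz₂ : ¬G.Reachable z u₂ := fun hz' => hz (hz'.trans h₁₂.symm)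
    have hz₁ : ¬G.Reachable u₁ z := fun hz' => hz hz'.symm
    have heq : c u₁ z = c u₂ z := by
      rw [hG, comap_colorGraph Subtype.val_injective] at h₁₂ hz₁
      exact (hc.comap Subtype.val_injective).eq_of_reachable h₁₂ hz₁
    exact h (calc c v u₁ = c z u₁ := (color_eq hz h₁).symm
      _ = c u₁ z := hc.symm _ _
      _ = c u₂ z := heq
      _ = c z u₂ := hc.symm _ _
      _ = c v u₂ := color_eq hz₂ h₂)
  exact fun z z' => (reach z).trans (reach z').symm

theorem IsGallaiColoring.exists_not_preconnected [Finite V] [Nontrivial V]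
    (hc : IsGallaiColoring c) {a : Fin 3 → C} (ha : Function.Injective a) :
    ∃ t, ¬(colorGraph c (a t)).Preconnected := by
  induction hN : Nat.card V using Nat.strong_induction_on generalizing V with
  | _ N ih =>
  by_contra! hconn
  obtain ⟨v⟩ : Nonempty V := inferInstance
  have nbr (t : Fin 3) : ∃ u : {x // x ≠ v}, c v u = a t := by
    obtain ⟨u, hu⟩ := (hconn t).exists_adj_of_nontrivial v
    obtain ⟨hne, hcol⟩ := (colorGraph_adj hc.symm).1 hu
    exact ⟨⟨u, hne.symm⟩, hcol⟩
  choose u hu using nbr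
  have : Nontrivial {x // x ≠ v} :=
    ⟨u 0, u 1, fun h => ha.ne (by decide : (0 : Fin 3) ≠ 1) (by rw [← hu, ← hu, h])⟩
  obtain ⟨t, ht⟩ := ih _ (hN ▸ Finite.card_subtype_lt (p := (· ≠ v)) (x := v) (not_not.2 rfl))
    (hc.comap Subtype.val_injective) rfl
  have color_ne {s s' : Fin 3} (h : s ≠ s') : c v (u s) ≠ a s' := by rw [hu]; exact ha.ne h
  refine ht (comap_colorGraph (c := c) Subtype.val_injective ▸
    hc.preconnected_comap_ne (hconn t) (u₁ := u (t + 1)) (u₂ := u (t + 2))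
      (color_ne (by grind)) (color_ne (by grind)) ?_)
  rw [hu (t + 2)]
  exact color_ne (by grind)

theorem IsGallaiColoring.exists_adj_and_not_preconnected [Finite V] [Nontrivial V]
    (hc : IsGallaiColoring c) (h : ∀ a b, ∃ x y, x ≠ y ∧ c x y ≠ a ∧ c x y ≠ b) :
    ∃ i x y, (colorGraph c i).Adj x y ∧ ¬(colorGraph c i).Preconnected := by
  obtain ⟨x₀, y₀, hxy₀⟩ := exists_pair_ne V
  obtain ⟨x₁, y₁, hxy₁, h₁₀, -⟩ := h (c x₀ y₀) (c x₀ y₀)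
  obtain ⟨x₂, y₂, hxy₂, h₂₀, h₂₁⟩ := h (c x₀ y₀) (c x₁ y₁)
  have hinj : Function.Injective ![c x₀ y₀, c x₁ y₁, c x₂ y₂] := by
    intro s t hst
    fin_cases s <;> fin_cases t <;> simp_all
  obtain ⟨t, ht⟩ := hc.exists_not_preconnected hinj
  have hused : ∃ x y, (colorGraph c (![c x₀ y₀, c x₁ y₁, c x₂ y₂] t)).Adj x y := by
    simp only [colorGraph_adj hc.symm]
    fin_cases t
    exacts [⟨x₀, y₀, hxy₀, rfl⟩, ⟨x₁, y₁, hxy₁, rfl⟩, ⟨x₂, y₂, hxy₂, rfl⟩]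
  obtain ⟨x, y, hxy⟩ := hused
  exact ⟨_, x, y, hxy, ht⟩

theorem IsGallaiColoring.eq_out_out (hc : IsGallaiColoring c) {x y : V}
    (hxy : ¬(colorGraph c i).Reachable x y) :
    c x y = c ((colorGraph c i).connectedComponentMk x).out
      ((colorGraph c i).connectedComponentMk y).out := by
  have reach (z : V) :
      (colorGraph c i).Reachable z ((colorGraph c i).connectedComponentMk z).out :=
    (ConnectedComponent.exact (Quot.out_eq _)).symm
  have hyx : ¬(colorGraph c i).Reachable y ((colorGraph c i).connectedComponentMk x).out :=
    fun h => hxy ((reach x).trans h.symm)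
  rw [hc.eq_of_reachable (reach x) hxy, hc.symm, hc.eq_of_reachable (reach y) hyx, hc.symm]

theorem IsGallaiPartition.comp {U : Type*} {r : U → U → C} {p : U → W} {q : V → U} {a b : C}
    (hp : IsGallaiPartition r p a b) (hq : Function.Surjective q)
    (hr : ∀ x y, q x ≠ q y → c x y = r (q x) (q y)) : IsGallaiPartition c (p ∘ q) a b where
  surjective := hp.surjective.comp hq
  eq_of_eq x x' y y' hx hy hne := by
    have hne' : (p ∘ q) x' ≠ (p ∘ q) y' := by rwa [← hx, ← hy]
    rw [hr x y fun h => hne (congrArg p h), hr x' y' fun h => hne' (congrArg p h)]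
    exact hp.eq_of_eq hx hy hne
  eq_or_eq x y hne := by
    rw [hr x y fun h => hne (congrArg p h)]
    exact hp.eq_or_eq hne

theorem IsGallaiColoring.exists_isGallaiPartition [Finite V] [Nontrivial V]
    (hc : IsGallaiColoring c) :
    ∃ (W : Type u) (_ : Nontrivial W) (p : V → W) (a b : C), IsGallaiPartition c p a b := by
  induction hN : Nat.card V using Nat.strong_induction_on generalizing V with
  | _ N ih =>
  by_cases htwo : ∃ a b, ∀ x y, x ≠ y → c x y = a ∨ c x y = b
  · obtain ⟨a, b, hab⟩ := htwo
    refine ⟨V, ‹_›, id, a, b, Function.surjective_id, ?_, hab⟩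
    rintro x _ y _ rfl rfl -
    rfl
  · push Not at htwo
    obtain ⟨i, x, y, hadj, hdisc⟩ := hc.exists_adj_and_not_preconnected htwo
    have hnontrivial : Nontrivial (colorGraph c i).ConnectedComponent := by
      rw [Preconnected] at hdisc
      push Not at hdisc
      obtain ⟨u, w, huw⟩ := hdisc
      exact ⟨_, _, fun h => huw (ConnectedComponent.exact h)⟩
    have hcard : Nat.card (colorGraph c i).ConnectedComponent < N := by
      refine hN ▸ (Nat.card_le_card_of_surjective _ Quot.mk_surjective).lt_of_ne fun heq => ?_
      have hbij : Function.Bijective (colorGraph c i).connectedComponentMk :=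
        (Nat.bijective_iff_surjective_and_card _).2 ⟨Quot.mk_surjective, heq.symm⟩
      exact hadj.ne (hbij.1 (ConnectedComponent.sound hadj.reachable))
    have hcomp : IsGallaiColoring fun u w : (colorGraph c i).ConnectedComponent =>
        c u.out w.out := hc.comap (Function.LeftInverse.injective Quot.out_eq)
    obtain ⟨W, hW, p, a, b, hp⟩ := ih _ hcard hcomp rfl
    exact ⟨W, hW, _, a, b, hp.comp Quot.mk_surjective fun x y hne =>
      hc.eq_out_out fun h => hne (ConnectedComponent.sound h)⟩

theorem exists_ne_le_add_of_le_sum {ι : Type*} [Fintype ι] [Nontrivial ι] {w : ι → ℕ} {m : ℕ}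
    (hm : 3 ≤ m) (hsum : 5 * m + 2 ≤ ∑ u, w u) (hle : ∀ u, ∑ u, w u ≤ w u + 2 * (2 * m + 1)) :
    ∃ u v, u ≠ v ∧ 2 * m + 2 ≤ w u + w v := by
  classical
  by_contra! hpair
  obtain ⟨u, hu⟩ := Finite.exists_max w
  have eq_of_ne {v : ι} (hv : v ≠ u) : w v = m := by
    linarith [hpair v u hv, hu v, hle v]
  obtain ⟨v, hv⟩ := exists_ne u
  have hrest : ∑ v, w v = w u + (Finset.univ.erase u).card * m := by
    rw [← Finset.add_sum_erase _ _ (Finset.mem_univ u), Finset.sum_congr rfl fun v hv =>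
      eq_of_ne (Finset.ne_of_mem_erase hv), Finset.sum_const, smul_eq_mul]
  have hv_eq := eq_of_ne hv
  have hpair_le := hpair u v hv.symm
  have hu_ge := hle u
  rcases le_or_gt (Finset.univ.erase u).card 4 with h4 | h5
  · linarith [Nat.mul_le_mul_right m h4]
  · linarith [Nat.mul_le_mul_right m h5]

theorem IsGallaiPartition.card_le [Finite V] {p : V → W} {a b : C}
    (hp : IsGallaiPartition c p a b) (hs : ∀ x y, c x y = c y x) (x : V) :
    Nat.card V ≤ {y | p y = p x}.ncard + (((colorGraph c a).neighborSet x).ncard +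
      ((colorGraph c b).neighborSet x).ncard) := by
  have hcover : Set.univ ⊆ {y | p y = p x} ∪
      ((colorGraph c a).neighborSet x ∪ (colorGraph c b).neighborSet x) := by
    intro y _
    by_cases hy : p y = p x
    · exact .inl hy
    · have hxy : x ≠ y := fun h => hy (h ▸ rfl)
      simp only [Set.mem_union, mem_neighborSet, colorGraph_adj hs, hxy, ne_eq, not_false_eq_true,
        true_and]
      exact .inr (hp.eq_or_eq (Ne.symm hy))
  calc Nat.card V = (Set.univ : Set V).ncard := (Set.ncard_univ V).symm
    _ ≤ _ := Set.ncard_le_ncard hcover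
    _ ≤ _ := (Set.ncard_union_le _ _).trans (by gcongr; exact Set.ncard_union_le _ _)

theorem IsGallaiPartition.ne_of_lt_ncard_add_ncard [Finite V] {p : V → W} {a b : C} {d : ℕ}
    (hp : IsGallaiPartition c p a b) (hs : ∀ x y, c x y = c y x)
    (hd : ∀ i x, ((colorGraph c i).neighborSet x).ncard ≤ d) {x y z : V} (hxy : p x ≠ p y)
    (hlt : d < {t | p t = p x}.ncard + {t | p t = p y}.ncard) (hzx : p z ≠ p x)
    (hzy : p z ≠ p y) : c z x ≠ c z y := by
  intro h
  have hdisj : Disjoint {t | p t = p x} {t | p t = p y} :=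
    Set.disjoint_left.2 fun t hx hy => hxy (hx.symm.trans hy)
  have hsub : {t | p t = p x} ∪ {t | p t = p y} ⊆ (colorGraph c (c z x)).neighborSet z := by
    intro t ht
    rw [mem_neighborSet, colorGraph_adj hs]
    rcases ht with ht | ht
    · exact ⟨fun e => hzx (e ▸ ht), hp.eq_of_eq rfl ht (ht.symm ▸ hzx)⟩
    · exact ⟨fun e => hzy (e ▸ ht), h ▸ hp.eq_of_eq rfl ht (ht.symm ▸ hzy)⟩
  refine hlt.not_ge ?_
  calc {t | p t = p x}.ncard + {t | p t = p y}.ncard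
      = ({t | p t = p x} ∪ {t | p t = p y}).ncard := (Set.ncard_union_eq hdisj).symm
    _ ≤ _ := Set.ncard_le_ncard hsub
    _ ≤ d := hd _ z

/-- A vertex outside the two parts does not send the same color to both, so one of the only two
available colors is the color between the parts. -/
theorem IsGallaiPartition.card_le_of_lt_ncard_add_ncard [Finite V] {p : V → W} {a b : C} {d : ℕ}
    (hp : IsGallaiPartition c p a b) (hs : ∀ x y, c x y = c y x)
    (hd : ∀ i x, ((colorGraph c i).neighborSet x).ncard ≤ d) {u w : W} (huw : u ≠ w)
    (hlt : d < {x | p x = u}.ncard + {x | p x = w}.ncard) : Nat.card V ≤ d + d := by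
  obtain ⟨x, rfl⟩ := hp.surjective u
  obtain ⟨y, rfl⟩ := hp.surjective w
  have hcover : Set.univ ⊆
      (colorGraph c (c x y)).neighborSet x ∪ (colorGraph c (c x y)).neighborSet y := by
    intro z _
    simp only [Set.mem_union, mem_neighborSet, colorGraph_adj hs]
    by_cases hzx : p z = p x
    · exact .inr ⟨fun e => huw (e ▸ hzx.symm), (hs y z).trans (hp.eq_of_eq hzx rfl (hzx ▸ huw))⟩
    by_cases hzy : p z = p y
    · exact .inl ⟨fun e => hzx (e ▸ rfl), hp.eq_of_eq rfl hzy (hzy ▸ huw)⟩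
    have hxne : x ≠ z := fun e => hzx (e ▸ rfl)
    have hyne : y ≠ z := fun e => hzy (e ▸ rfl)
    rw [hs x z, hs y z]
    have := hp.ne_of_lt_ncard_add_ncard hs hd huw hlt hzx hzy
    have := hp.eq_or_eq hzx
    have := hp.eq_or_eq hzy
    have := hp.eq_or_eq huw
    grind
  calc Nat.card V = (Set.univ : Set V).ncard := (Set.ncard_univ V).symm
    _ ≤ _ := Set.ncard_le_ncard hcover
    _ ≤ _ := Set.ncard_union_le _ _
    _ ≤ d + d := Nat.add_le_add (hd _ _) (hd _ _)

theorem IsGallaiColoring.exists_lt_ncard_neighborSet [Finite V] (hc : IsGallaiColoring c) {m : ℕ}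
    (hm : 3 ≤ m) (hV : 5 * m + 2 ≤ Nat.card V) :
    ∃ i x, 2 * m + 1 < ((colorGraph c i).neighborSet x).ncard := by
  by_contra! hd
  have : Nontrivial V := Finite.one_lt_card_iff_nontrivial.1 (by omega)
  obtain ⟨W, _, p, a, b, hp⟩ := hc.exists_isGallaiPartition
  have := Finite.of_surjective p hp.surjective
  have := Fintype.ofFinite W
  have hsum : ∑ u, {x | p x = u}.ncard = Nat.card V := by
    rw [← Nat.card_congr (Equiv.sigmaFiberEquiv p), Nat.card_sigma]
    rfl
  have hpart (u : W) : ∑ u, {x | p x = u}.ncard ≤ {x | p x = u}.ncard + 2 * (2 * m + 1) := by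
    obtain ⟨x, rfl⟩ := hp.surjective u
    linarith [hp.card_le hc.symm x, hd a x, hd b x]
  obtain ⟨u, w, huw, hle⟩ := exists_ne_le_add_of_le_sum hm (hsum ▸ hV) hpart
  linarith [hp.card_le_of_lt_ncard_add_ncard hc.symm hd huw hle]

end Gallai

section StarPlus

variable {V C : Type*}

theorem isMonoCopy_iff {α : Type*} {k : ℕ} {G : SimpleGraph V} {c : V → V → Fin k}
    {H : SimpleGraph α} (hs : ∀ x y, c x y = c y x) :
    IsMonoCopy G c H ↔ ∃ i, H ⊑ G ⊓ colorGraph c i := by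
  constructor
  · rintro ⟨f, i, hf, h⟩
    exact ⟨i, ⟨⟨⟨f, fun hab => ⟨(h _ _ hab).1, (colorGraph_adj hs).2
      ⟨(h _ _ hab).1.ne, (h _ _ hab).2⟩⟩⟩, hf⟩⟩⟩
  · rintro ⟨i, ⟨f⟩⟩
    refine ⟨f, i, f.injective, fun a b hab => ?_⟩
    obtain ⟨hG, hcol⟩ := f.toHom.map_rel hab
    exact ⟨hG, ((colorGraph_adj hs).1 hcol).2⟩

theorem fromRel_isContained {α : Type*} {r : α → α → Prop} {G : SimpleGraph V} (f : α ↪ V)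
    (hf : ∀ a b, r a b → a ≠ b → G.Adj (f a) (f b)) : SimpleGraph.fromRel r ⊑ G :=
  ⟨⟨⟨f, fun {a b} h => h.2.elim (hf a b · h.1) fun hr => (hf b a hr h.1.symm).symm⟩,
    f.injective⟩⟩

theorem exists_embedding_of_le_ncard [Finite V] {s : Set V} {n : ℕ} (h : n ≤ s.ncard) :
    ∃ g : Fin n ↪ V, ∀ t, g t ∈ s := by
  have := Fintype.ofFinite s
  rw [← Nat.card_coe_set_eq, Nat.card_eq_fintype_card, ← Fintype.card_fin n] at h
  obtain ⟨g⟩ := Function.Embedding.nonempty_of_card_le h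
  exact ⟨g.trans (.subtype _), fun t => (g t).2⟩

theorem starPlusG_succ_isContained_of_leaves {G : SimpleGraph V} {v y : V} {n : ℕ}
    (l : Fin (n + 1) ↪ V) (hvl : ∀ t, G.Adj v (l t)) (hy : y ∉ Set.range l) (hvy : v ≠ y)
    (hly : G.Adj (l (Fin.last n)) y) : starPlusG (n + 1) ⊑ G := by
  have hv : v ∉ Set.range (Fin.Embedding.snoc l hy) := by
    rintro ⟨t, ht⟩
    induction t using Fin.lastCases with
    | last => exact hvy (by rw [← ht, Fin.Embedding.snoc_last])
    | cast t => exact (hvl t).ne (by rw [← ht, Fin.Embedding.snoc_castSucc])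
  refine fromRel_isContained (Fin.Embedding.cons (Fin.Embedding.snoc l hy) hv)
    fun a b hab hne => ?_
  rcases hab with ⟨rfl, hb⟩ | ⟨ha, hb⟩
  · obtain ⟨b, rfl⟩ := Fin.exists_succ_eq.2 hne.symm
    obtain ⟨t, rfl⟩ : ∃ t, Fin.castSucc t = b :=
      ⟨⟨b, by simpa [Nat.lt_succ_iff] using hb⟩, rfl⟩
    simpa using hvl t
  · obtain rfl : a = (Fin.last n).castSucc.succ := Fin.ext ha
    obtain rfl : b = (Fin.last (n + 1)).succ := Fin.ext hb
    simpa using hly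

theorem starPlusG_succ_isContained [Finite V] {G : SimpleGraph V} {v x y : V} {n : ℕ}
    (hvx : G.Adj v x) (hxy : G.Adj x y) (hvy : v ≠ y)
    (hcard : n + 1 ≤ (G.neighborSet v \ {y}).ncard) : starPlusG (n + 1) ⊑ G := by
  obtain ⟨g, hg⟩ : ∃ g : Fin n ↪ V, ∀ t, g t ∈ (G.neighborSet v \ {y}) \ {x} :=
    exists_embedding_of_le_ncard
      ((Nat.le_sub_one_of_lt hcard).trans (Set.pred_ncard_le_ncard_sdiff_singleton _ _))
  have hx : x ∉ Set.range g := fun ⟨t, ht⟩ => (hg t).2 ht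
  have leaf (t : Fin (n + 1)) :
      G.Adj v (Fin.Embedding.snoc g hx t) ∧ Fin.Embedding.snoc g hx t ≠ y := by
    induction t using Fin.lastCases with
    | last => rw [Fin.Embedding.snoc_last]; exact ⟨hvx, hxy.ne⟩
    | cast t => rw [Fin.Embedding.snoc_castSucc]; exact (hg t).1
  exact starPlusG_succ_isContained_of_leaves (Fin.Embedding.snoc g hx) (fun t => (leaf t).1)
    (fun ⟨t, ht⟩ => (leaf t).2 ht) hvy (by rwa [Fin.Embedding.snoc_last])

theorem exists_le_ncard_neighborSet_of_starPlusG_isContained [Finite V] {G : SimpleGraph V}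
    {n : ℕ} (h : starPlusG n ⊑ G) : ∃ v, n ≤ (G.neighborSet v).ncard := by
  obtain ⟨f⟩ := h
  let g : Fin n ↪ V := (Fin.castAddEmb 1).trans ((Fin.succEmb _).trans f.toEmbedding)
  have hg (t : Fin n) : g t ∈ G.neighborSet (f 0) := by
    refine f.toHom.map_rel ((SimpleGraph.fromRel_adj _ _ _).2 ⟨?_, .inl (.inl ⟨rfl, ?_⟩)⟩)
    · exact (Fin.succ_ne_zero _).symm
    · exact t.2
  refine ⟨f 0, ?_⟩
  calc n = (Set.range g).ncard := by
        rw [← Nat.card_coe_set_eq, Nat.card_range_of_injective g.injective, Nat.card_fin]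
    _ ≤ _ := Set.ncard_le_ncard (Set.range_subset_iff.2 hg)

theorem starPlusG_free_of_forall_adj {G : SimpleGraph V} {n : ℕ} (hn : 2 ≤ n) {v : V}
    (hv : ∀ x y, G.Adj x y → x = v ∨ y = v) : (starPlusG n).Free G := by
  rintro ⟨f⟩
  have hstar : (starPlusG n).Adj 0 ⟨1, by omega⟩ :=
    (SimpleGraph.fromRel_adj _ _ _).2 ⟨by simp, .inl (.inl ⟨rfl, one_le_two.trans hn⟩)⟩
  have hpendant : (starPlusG n).Adj ⟨n, by omega⟩ ⟨n + 1, by omega⟩ :=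
    (SimpleGraph.fromRel_adj _ _ _).2 ⟨by simp, .inl (.inr ⟨rfl, rfl⟩)⟩
  rcases hv _ _ (f.toHom.map_rel hstar) with h | h <;>
    rcases hv _ _ (f.toHom.map_rel hpendant) with h' | h' <;>
    have heq := Fin.ext_iff.1 (f.injective (h.trans h'.symm)) <;>
    simp only [Fin.val_zero] at heq <;> omega

variable {c : V → V → C} {i : C} {n : ℕ}

/-- A color-`i` neighbor `x` of `v` is not joined to `y` in color `i`, so the edges `x y` and `v y`
of the triangle `v x y` have the same color. -/
theorem IsGallaiColoring.insert_neighborSet_subset [Finite V] (hc : IsGallaiColoring c)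
    (hfree : (starPlusG (n + 1)).Free (colorGraph c i)) {v y : V}
    (hdeg : n + 1 ≤ ((colorGraph c i).neighborSet v).ncard) (hvy : v ≠ y) (hy : c y v ≠ i) :
    insert v ((colorGraph c i).neighborSet v) ⊆ (colorGraph c (c y v)).neighborSet y := by
  have hy_notMem : y ∉ (colorGraph c i).neighborSet v := fun h =>
    hy ((hc.symm y v).trans ((colorGraph_adj hc.symm).1 h).2)
  rw [Set.insert_subset_iff]
  refine ⟨(colorGraph_adj hc.symm).2 ⟨hvy.symm, rfl⟩, fun x hx => ?_⟩
  have hxy : x ≠ y := fun h => hy_notMem (h ▸ hx)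
  have hcolor : c x y ≠ i := fun h => hfree (starPlusG_succ_isContained hx
    ((colorGraph_adj hc.symm).2 ⟨hxy, h⟩) hvy (by rwa [Set.sdiff_singleton_eq_self hy_notMem]))
  obtain ⟨-, rfl⟩ := (colorGraph_adj hc.symm).1 hx
  rw [mem_neighborSet, colorGraph_adj hc.symm]
  refine ⟨hxy.symm, ?_⟩
  rw [hc.symm v x] at hcolor hy
  rw [hc.symm y v] at hy ⊢
  rw [hc.symm y x]
  exact hc.eq_of_ne_of_ne hxy hvy hcolor hy

theorem IsGallaiColoring.eq_or_eq_of_adj [Finite V] (hc : IsGallaiColoring c)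
    (hfree : ∀ j, (starPlusG (n + 1)).Free (colorGraph c j)) {v x y : V}
    (hdeg : n + 2 ≤ ((colorGraph c i).neighborSet v).ncard) (hxy : (colorGraph c i).Adj x y) :
    x = v ∨ y = v := by
  by_contra! h
  obtain ⟨hx, hy⟩ := h
  have notMem {a b : V} (hab : (colorGraph c i).Adj a b) (hb : b ≠ v) :
      ¬(colorGraph c i).Adj v a := fun ha =>
    hfree i (starPlusG_succ_isContained ha hab hb.symm
      ((Nat.le_sub_one_of_lt hdeg).trans (Set.pred_ncard_le_ncard_sdiff_singleton _ _)))
  have hxv : c x v ≠ i := fun h =>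
    notMem hxy hy ((colorGraph_adj hc.symm).2 ⟨hx.symm, (hc.symm v x).trans h⟩)
  have hsub := hc.insert_neighborSet_subset (hfree i) (by omega) hx.symm hxv
  have hdeg_x : n + 1 ≤ ((colorGraph c (c x v)).neighborSet x).ncard :=
    (by omega : n + 1 ≤ _).trans (Set.ncard_le_ncard ((Set.subset_insert _ _).trans hsub))
  have hyx : c y x = i := (hc.symm y x).trans ((colorGraph_adj hc.symm).1 hxy).2
  have hvy : (colorGraph c i).Adj y v := by
    have hsub' := hc.insert_neighborSet_subset (hfree _) hdeg_x hxy.ne (hyx ▸ hxv.symm)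
    exact hyx ▸ hsub' (.inr (hsub (.inl rfl)))
  exact notMem hxy.symm hx hvy.symm

theorem IsGallaiColoring.exists_add_two_le_ncard_neighborSet [Finite V]
    (hc : IsGallaiColoring c) (hfree : (starPlusG (n + 1)).Free (colorGraph c i))
    (hV : n + 3 ≤ Nat.card V) {v : V} (hdeg : n + 1 ≤ ((colorGraph c i).neighborSet v).ncard) :
    ∃ j w, n + 2 ≤ ((colorGraph c j).neighborSet w).ncard := by
  by_contra! hlt
  have hinsert : (insert v ((colorGraph c i).neighborSet v)).ncard < Nat.card V :=
    (Set.ncard_insert_le _ _).trans_lt (by linarith [hlt i v])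
  obtain ⟨y, hy⟩ : ∃ y, y ∉ insert v ((colorGraph c i).neighborSet v) := by
    by_contra! hall
    rw [Set.eq_univ_of_forall hall, Set.ncard_univ] at hinsert
    exact hinsert.false
  rw [Set.mem_insert_iff, not_or, mem_neighborSet, colorGraph_adj hc.symm] at hy
  obtain ⟨hyv, hvy⟩ := hy
  have hsub := hc.insert_neighborSet_subset hfree hdeg (Ne.symm hyv) fun h =>
    hvy ⟨Ne.symm hyv, (hc.symm v y).trans h⟩
  have hcard := Set.ncard_le_ncard hsub
  rw [Set.ncard_insert_of_notMem (notMem_neighborSet_self _)] at hcard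
  linarith [hlt (c y v) y]

end StarPlus

section UpperBound

variable {V C : Type*} {c : V → V → C} {m : ℕ}

theorem card_le_of_ncard_neighborSet_le [Finite V] {d : ℕ} (hs : ∀ x y, c x y = c y x)
    {K : Finset C} (hK : ∀ x y, x ≠ y → c x y ∈ K)
    (hd : ∀ i x, ((colorGraph c i).neighborSet x).ncard ≤ d) : Nat.card V ≤ 1 + K.card * d := by
  rcases isEmpty_or_nonempty V with hV | ⟨⟨v⟩⟩
  · rw [Nat.card_of_isEmpty]
    exact Nat.zero_le _
  have hcover : Set.univ ⊆ {v} ∪ ⋃ i ∈ K, (colorGraph c i).neighborSet v := by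
    intro x _
    rcases eq_or_ne x v with rfl | hx
    · exact .inl rfl
    · exact .inr (Set.mem_iUnion₂.2
        ⟨c v x, hK v x hx.symm, (colorGraph_adj hs).2 ⟨hx.symm, rfl⟩⟩)
  calc Nat.card V = (Set.univ : Set V).ncard := (Set.ncard_univ V).symm
    _ ≤ _ := Set.ncard_le_ncard hcover
    _ ≤ ({v} : Set V).ncard + (⋃ i ∈ K, (colorGraph c i).neighborSet v).ncard :=
      Set.ncard_union_le _ _
    _ ≤ 1 + ∑ i ∈ K, ((colorGraph c i).neighborSet v).ncard := by
      rw [Set.ncard_singleton]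
      gcongr
      exact Finset.set_ncard_biUnion_le _ _
    _ ≤ 1 + K.card * d := by
      gcongr
      exact Finset.sum_le_card_nsmul _ _ _ fun i _ => hd i v

/-- With at least three colors this is the degree bound for Gallai colorings; with fewer, the
degrees at a single vertex already bound the order. -/
theorem IsGallaiColoring.card_add_two_le_of_ncard_neighborSet_le [Finite V]
    (hc : IsGallaiColoring c) (hm : 3 ≤ m)
    (hd : ∀ i x, ((colorGraph c i).neighborSet x).ncard ≤ 2 * m + 1) {K : Finset C}
    (hK : ∀ x y, x ≠ y → c x y ∈ K) : Nat.card V + 2 ≤ 5 * m + K.card := by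
  rcases le_or_gt K.card 2 with h2 | h3
  · have hcard := card_le_of_ncard_neighborSet_le hc.symm hK hd
    interval_cases K.card <;> omega
  · by_contra! hlt
    obtain ⟨i, x, hx⟩ := hc.exists_lt_ncard_neighborSet hm (by omega)
    exact hx.not_ge (hd i x)

theorem starPlusG_free_comap {n : ℕ} (hfree : ∀ i, (starPlusG n).Free (colorGraph c i))
    {W : Type*} (f : W ↪ V) (i : C) :
    (starPlusG n).Free (colorGraph (fun x y => c (f x) (f y)) i) := by
  rw [← comap_colorGraph f.injective]
  exact fun h => hfree i (h.trans (Embedding.comap f _).isContained)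

/-- If some color `i` has a vertex `v` of degree at least `2 * m + 3`, then all edges of color `i`
meet `v`, so deleting `v` also removes the color `i`. -/
theorem IsGallaiColoring.card_add_two_le [Finite V] (hc : IsGallaiColoring c) (hm : 3 ≤ m)
    (hfree : ∀ i, (starPlusG (2 * m + 2)).Free (colorGraph c i)) {K : Finset C}
    (hK : ∀ x y, x ≠ y → c x y ∈ K) : Nat.card V + 2 ≤ 5 * m + K.card := by
  classical
  induction K using Finset.strongInduction generalizing V with
  | H K ih =>
  by_cases hbig : ∃ i v, 2 * m + 3 ≤ ((colorGraph c i).neighborSet v).ncard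
  · obtain ⟨i, v, hv⟩ := hbig
    have hstar {x y : V} (hxy : x ≠ y) (h : c x y = i) : x = v ∨ y = v :=
      hc.eq_or_eq_of_adj hfree hv ((colorGraph_adj hc.symm).2 ⟨hxy, h⟩)
    have hiK : i ∈ K := by
      obtain ⟨x, hx⟩ := Set.nonempty_of_ncard_ne_zero (Nat.ne_zero_of_lt hv)
      obtain ⟨hvx, rfl⟩ := (colorGraph_adj hc.symm).1 hx
      exact hK v x hvx
    have hK' (x y : {x // x ≠ v}) (hxy : x ≠ y) : c x y ∈ K.erase i := by
      have hxy' := Subtype.coe_injective.ne hxy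
      exact Finset.mem_erase.2 ⟨fun h => (hstar hxy' h).elim x.2 y.2, hK x y hxy'⟩
    have hcard : 1 + Nat.card {x // x ≠ v} = Nat.card V := by
      rw [← Set.ncard_add_ncard_compl {v}, Set.ncard_singleton]
      rfl
    have hdelete := ih _ (Finset.erase_ssubset hiK) (hc.comap Subtype.val_injective)
      (starPlusG_free_comap hfree (.subtype _)) hK'
    have := Finset.card_erase_add_one hiK
    omega
  · push Not at hbig
    rcases le_or_gt (Nat.card V) (2 * m + 3) with hV | hV
    · omega
    · refine hc.card_add_two_le_of_ncard_neighborSet_le hm (fun i x => ?_) hK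
      by_contra! hdeg
      obtain ⟨j, w, hw⟩ := hc.exists_add_two_le_ncard_neighborSet (hfree i) hV hdeg
      exact hw.not_gt (hbig j w)

end UpperBound

/-- A good coloring: an edge coloring of `G` without rainbow triangles and without monochromatic
copies of `H`. -/
structure IsGoodColoring {α V : Type*} {k : ℕ} (G : SimpleGraph V) (c : V → V → Fin k)
    (H : SimpleGraph α) : Prop where
  symm : ∀ x y, c x y = c y x
  noRainbowTriangle : NoRainbowTriangle G c
  not_isMonoCopy : ¬IsMonoCopy G c H

section GoodColoring

variable {α V W : Type*} {k : ℕ} {G : SimpleGraph V} {H : SimpleGraph α} {c : V → V → Fin k}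

theorem IsGallaiColoring.noRainbowTriangle (hc : IsGallaiColoring c) (G : SimpleGraph V) :
    NoRainbowTriangle G c := by
  rintro ⟨x, y, z, -, hyz, hxz, hne₁, hne₂, hne₃⟩
  exact hne₂ (hc.eq_of_ne_of_ne hxz.ne hyz.ne hne₃.symm hne₁.symm).symm

theorem IsGoodColoring.isGallaiColoring (hc : IsGoodColoring ⊤ c H) : IsGallaiColoring c where
  symm := hc.symm
  eq_of_ne_of_ne x y z hxz hyz hx hy := by
    by_contra h
    have hxy : x ≠ y := fun e => h (e ▸ rfl)
    exact hc.noRainbowTriangle ⟨x, y, z, hxy, hyz, hxz, hy.symm, Ne.symm h, hx.symm⟩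

theorem IsGoodColoring.free (hc : IsGoodColoring ⊤ c H) (i : Fin k) : H.Free (colorGraph c i) :=
  fun h => hc.not_isMonoCopy ((isMonoCopy_iff hc.symm).2 ⟨i, by rwa [top_inf_eq]⟩)

theorem IsGoodColoring.comap (hc : IsGoodColoring G c H) {G' : SimpleGraph W} (f : Copy G' G) :
    IsGoodColoring G' (fun x y => c (f x) (f y)) H where
  symm x y := hc.symm (f x) (f y)
  noRainbowTriangle := fun ⟨x, y, z, hxy, hyz, hxz, hne⟩ => hc.noRainbowTriangle
    ⟨f x, f y, f z, f.toHom.map_rel hxy, f.toHom.map_rel hyz, f.toHom.map_rel hxz, hne⟩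
  not_isMonoCopy := fun ⟨g, i, hg, h⟩ => hc.not_isMonoCopy
    ⟨f ∘ g, i, f.injective.comp hg, fun a b hab =>
      ⟨f.toHom.map_rel (h a b hab).1, (h a b hab).2⟩⟩

end GoodColoring

/-- The color between the blocks `r` and `s` of a blown-up five-cycle: `0` along the cycle, `1`
along the complementary five-cycle, `2` inside a block. -/
def pentagonColor (r s : ZMod 5) : ℕ :=
  if r = s then 2 else if r - s = 1 ∨ s - r = 1 then 0 else 1

/-- The coloring behind the lower bound: the vertices below `5 * m + 2` form a blown-up five-cycle
whose blocks are the residue classes modulo `5`, and each further vertex is joined to all smaller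
vertices in a color of its own, the first of these colors being `3`. -/
def coneColor (m a b : ℕ) : ℕ :=
  if max a b < 5 * m + 2 then pentagonColor a b else max a b + 1 - 5 * m

section Construction

variable {k m M : ℕ}

theorem pentagonColor_lt : ∀ r s, pentagonColor r s < 3 := by decide

/-- Two edges of every triangle contain its largest vertex, and outside the blown-up five-cycle that
vertex alone determines their color. -/
theorem isGallaiColoring_coneColor (m : ℕ) : IsGallaiColoring (coneColor m) where
  symm a b := by
    have pentagonColor_comm : ∀ r s, pentagonColor r s = pentagonColor s r := by decide
    rw [coneColor, coneColor, max_comm, pentagonColor_comm]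
  eq_of_ne_of_ne a b d _ _ hne₁ hne₂ := by
    have pentagonColor_eq : ∀ r s t, pentagonColor r t ≠ pentagonColor r s →
        pentagonColor s t ≠ pentagonColor r s → pentagonColor r t = pentagonColor s t := by decide
    have := pentagonColor_eq a b d
    unfold coneColor at *
    grind

theorem coneColor_lt (hk : 3 ≤ k) {a b : ℕ} (ha : a + 2 ≤ 5 * m + k) (hb : b + 2 ≤ 5 * m + k) :
    coneColor m a b < k := by
  have := pentagonColor_lt a b
  unfold coneColor
  split_ifs <;> omega

theorem card_filter_natCast_eq (m : ℕ) (r : ZMod 5) :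
    {b ∈ Finset.range (5 * m + 2) | ((b : ℕ) : ZMod 5) = r}.card =
      m + if r = 0 ∨ r = 1 then 1 else 0 := by
  have hr (b : ℕ) : (b : ZMod 5) = r ↔ b ≡ r.val [MOD 5] := by
    rw [← ZMod.natCast_eq_natCast_iff, ZMod.natCast_zmod_val]
  simp only [hr]
  rw [← Nat.count_eq_card_filter_range, Nat.count_modEq_card _ (by decide)]
  congr 1
  · omega
  · rw [Nat.mul_add_mod]
    clear hr
    revert r
    decide

theorem card_filter_natCast (m : ℕ) (P : ZMod 5 → Prop) [DecidablePred P] :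
    {b ∈ Finset.range (5 * m + 2) | P ((b : ℕ) : ZMod 5)}.card =
      ({r | P r} : Finset (ZMod 5)).card * m +
        ({r | P r ∧ (r = 0 ∨ r = 1)} : Finset (ZMod 5)).card := by
  rw [Finset.card_eq_sum_card_fiberwise (f := fun b : ℕ => (b : ZMod 5)) (t := {r | P r})
    fun b hb => by simpa using (Finset.mem_filter.1 hb).2]
  calc _ = ∑ r : ZMod 5 with P r, (m + if r = 0 ∨ r = 1 then 1 else 0) := by
        refine Finset.sum_congr rfl fun r hr => ?_
        rw [← card_filter_natCast_eq, Finset.filter_filter]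
        congr 1
        refine Finset.filter_congr fun b _ => and_iff_right_of_imp ?_
        rintro rfl
        exact (Finset.mem_filter.1 hr).2
    _ = _ := by
        rw [Finset.sum_add_distrib, Finset.sum_const, smul_eq_mul, ← Finset.card_filter,
          Finset.filter_filter]

/-- At most two blocks are seen in a given color. Both of the oversized blocks `0` and `1` are seen
only from block `3`, in color `1`, which is why the vertex `0` is not joined to block `3`. -/
theorem card_filter_pentagonColor_le (m : ℕ) {q : ℕ} (hq : q < 3) (r : ZMod 5) :
    {b ∈ Finset.range (5 * m + 2) |
      pentagonColor r ((b : ℕ) : ZMod 5) = q ∧ ¬(r = 3 ∧ b = 0)}.card ≤ 2 * m + 1 := by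
  have blocks_le_two : ∀ q < 3, ∀ r,
      ({s | pentagonColor r s = q} : Finset (ZMod 5)).card ≤ 2 := by decide
  have hcard := card_filter_natCast m fun s => pentagonColor r s = q
  have hmul := Nat.mul_le_mul_right m (blocks_le_two q hq r)
  by_cases h : r = 3 ∧ q = 1
  · obtain ⟨rfl, rfl⟩ := h
    have herase : {b ∈ Finset.range (5 * m + 2) |
        pentagonColor 3 ((b : ℕ) : ZMod 5) = 1 ∧ ¬((3 : ZMod 5) = 3 ∧ b = 0)} =
        {b ∈ Finset.range (5 * m + 2) | pentagonColor 3 ((b : ℕ) : ZMod 5) = 1}.erase 0 := by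
      ext b
      simp only [true_and, Finset.mem_filter, Finset.mem_erase]
      tauto
    have hbig : ({s | pentagonColor 3 s = 1 ∧ (s = 0 ∨ s = 1)} : Finset (ZMod 5)).card = 2 := by
      decide
    have hzero : 0 ∈ {b ∈ Finset.range (5 * m + 2) |
        pentagonColor 3 ((b : ℕ) : ZMod 5) = 1} := by
      simp only [Finset.mem_filter, Finset.mem_range, Nat.cast_zero]
      exact ⟨by omega, by decide⟩
    rw [herase, Finset.card_erase_of_mem hzero]
    omega
  · have big_le_one : ∀ q < 3, ∀ r, ¬(r = 3 ∧ q = 1) →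
        ({s | pentagonColor r s = q ∧ (s = 0 ∨ s = 1)} : Finset (ZMod 5)).card ≤ 1 := by decide
    have hbig := big_le_one q hq r h
    have hmono : {b ∈ Finset.range (5 * m + 2) |
        pentagonColor r ((b : ℕ) : ZMod 5) = q ∧ ¬(r = 3 ∧ b = 0)}.card ≤
        {b ∈ Finset.range (5 * m + 2) | pentagonColor r ((b : ℕ) : ZMod 5) = q}.card :=
      Finset.card_le_card (Finset.monotone_filter_right _ fun _ _ hb => hb.1)
    omega

/-- The numbering of the vertices used by `coneColoring`: the added vertex `none` is `0`. -/
def vertexLabel (x : Option (Fin M)) : ℕ :=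
  (finSuccEquiv M).symm x

/-- The vertices of the complete graph to which the new vertex is joined: all except block `3` of
the blown-up five-cycle. -/
def joinedVertices (m M : ℕ) : Finset (Fin M) :=
  {a | ¬((a : ℕ) + 1 < 5 * m + 2 ∧ (((a : ℕ) + 1 : ℕ) : ZMod 5) = 3)}

/-- `coneColor` as a `k`-coloring of the complete graph on `Fin M` together with a new vertex. -/
def coneColoring (hk : 3 ≤ k) (hM : M + 2 = 5 * m + k) (x y : Option (Fin M)) : Fin k :=
  ⟨coneColor m (vertexLabel x) (vertexLabel y),
    coneColor_lt hk (by unfold vertexLabel; omega) (by unfold vertexLabel; omega)⟩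

theorem vertexLabel_injective : Function.Injective (vertexLabel (M := M)) :=
  Fin.val_injective.comp (finSuccEquiv M).symm.injective

theorem card_joinedVertices_add (hM : 5 * m + 1 ≤ M) : (joinedVertices m M).card + m = M := by
  have hblock : ({a | (a : ℕ) + 1 < 5 * m + 2 ∧ (((a : ℕ) + 1 : ℕ) : ZMod 5) = 3} :
      Finset (Fin M)).card = m := by
    have hrange : {b ∈ Finset.range (5 * m + 2) | ((b : ℕ) : ZMod 5) = 3}.card = m :=
      (card_filter_natCast_eq m 3).trans (add_eq_left.2 (if_neg (by decide)))
    refine Eq.trans ?_ hrange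
    refine Finset.card_bij (fun a _ => (a : ℕ) + 1) (fun a ha => ?_) (fun a _ b _ h => ?_)
      fun b hb => ?_
    · simpa using ha
    · exact Fin.ext (Nat.succ_injective h)
    · rw [Finset.mem_filter, Finset.mem_range] at hb
      obtain ⟨b, rfl⟩ : ∃ b', b = b' + 1 := Nat.exists_eq_succ_of_ne_zero fun h => by
        rw [h, Nat.cast_zero] at hb
        exact absurd hb.2 (by decide)
      exact ⟨⟨b, by omega⟩, by simpa using hb, rfl⟩
  have hsplit := Finset.card_filter_add_card_filter_not (s := (Finset.univ : Finset (Fin M)))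
    fun a => (a : ℕ) + 1 < 5 * m + 2 ∧ (((a : ℕ) + 1 : ℕ) : ZMod 5) = 3
  rw [hblock, Finset.card_univ, Fintype.card_fin, add_comm] at hsplit
  exact hsplit

theorem isGallaiColoring_coneColoring (hk : 3 ≤ k) (hM : M + 2 = 5 * m + k) :
    IsGallaiColoring (coneColoring hk hM) where
  symm _ _ := Fin.ext ((isGallaiColoring_coneColor m).symm _ _)
  eq_of_ne_of_ne _ _ _ hxz hyz hx hy := Fin.ext <|
    (isGallaiColoring_coneColor m).eq_of_ne_of_ne (vertexLabel_injective.ne hxz)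
      (vertexLabel_injective.ne hyz) (Fin.val_ne_iff.2 hx) (Fin.val_ne_iff.2 hy)

theorem vertexLabel_ne_zero_of_adj {x y : Option (Fin M)}
    (h : (addVertex M (joinedVertices m M)).Adj x y) (hx : vertexLabel x < 5 * m + 2)
    (hx' : (vertexLabel x : ZMod 5) = 3) : vertexLabel y ≠ 0 := by
  intro hy
  obtain rfl : y = none := vertexLabel_injective hy
  obtain ⟨a, ha, rfl⟩ : ∃ a ∈ joinedVertices m M, x = some a := by
    rcases h with ⟨_, _, -, h, -⟩ | ⟨a, ha, ⟨rfl, -⟩ | ⟨-, h⟩⟩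
    · cases h
    · exact ⟨a, ha, rfl⟩
    · cases h
  exact (Finset.mem_filter.1 ha).2 ⟨hx, hx'⟩

theorem ncard_neighborSet_coneColoring_le (hk : 3 ≤ k) (hM : M + 2 = 5 * m + k) {i : Fin k}
    (hi : (i : ℕ) < 3) (x : Option (Fin M)) :
    ((addVertex M (joinedVertices m M) ⊓ colorGraph (coneColoring hk hM) i).neighborSet x).ncard ≤
      2 * m + 1 := by
  rw [← Set.ncard_image_of_injective _ vertexLabel_injective]
  refine le_trans ?_ (card_filter_pentagonColor_le m hi (vertexLabel x))
  rw [← Set.ncard_coe_finset]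
  refine Set.ncard_le_ncard ?_
  rintro _ ⟨y, ⟨hadj, hcol⟩, rfl⟩
  have hcone : coneColor m (vertexLabel x) (vertexLabel y) = i :=
    congrArg Fin.val ((colorGraph_adj (isGallaiColoring_coneColoring hk hM).symm).1 hcol).2
  have hlt : max (vertexLabel x) (vertexLabel y) < 5 * m + 2 := by
    by_contra hge
    rw [coneColor, if_neg hge] at hcone
    omega
  rw [coneColor, if_pos hlt] at hcone
  rw [max_lt_iff] at hlt
  exact Finset.mem_filter.2 ⟨Finset.mem_range.2 hlt.2, hcone,
    fun h => vertexLabel_ne_zero_of_adj hadj hlt.1 h.1 h.2⟩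

theorem starPlusG_free_coneColoring {n : ℕ} (hn : 2 ≤ n) (hk : 3 ≤ k) (hM : M + 2 = 5 * m + k)
    {i : Fin k} (hi : 3 ≤ (i : ℕ)) : (starPlusG n).Free (colorGraph (coneColoring hk hM) i) := by
  refine starPlusG_free_of_forall_adj hn (v := finSuccEquiv M ⟨i + 5 * m - 1, by omega⟩)
    fun x y hxy => ?_
  have hcone : coneColor m (vertexLabel x) (vertexLabel y) = i :=
    congrArg Fin.val ((colorGraph_adj (isGallaiColoring_coneColoring hk hM).symm).1 hxy).2
  have hmax : max (vertexLabel x) (vertexLabel y) = i + 5 * m - 1 := by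
    have := pentagonColor_lt (vertexLabel x) (vertexLabel y)
    unfold coneColor at hcone
    split_ifs at hcone <;> omega
  have eq_apex {z : Option (Fin M)} (hz : vertexLabel z = i + 5 * m - 1) :
      z = finSuccEquiv M ⟨i + 5 * m - 1, by omega⟩ :=
    (Equiv.symm_apply_eq _).1 (Fin.ext hz)
  rcases max_choice (vertexLabel x) (vertexLabel y) with h | h
  · exact .inl (eq_apex (h.symm.trans hmax))
  · exact .inr (eq_apex (h.symm.trans hmax))

theorem isGoodColoring_coneColoring (hk : 3 ≤ k) (hM : M + 2 = 5 * m + k) :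
    IsGoodColoring (addVertex M (joinedVertices m M)) (coneColoring hk hM)
      (starPlusG (2 * m + 2)) where
  symm := (isGallaiColoring_coneColoring hk hM).symm
  noRainbowTriangle := (isGallaiColoring_coneColoring hk hM).noRainbowTriangle _
  not_isMonoCopy h := by
    obtain ⟨i, hi⟩ := (isMonoCopy_iff (isGallaiColoring_coneColoring hk hM).symm).1 h
    rcases lt_or_ge (i : ℕ) 3 with hlt | hge
    · obtain ⟨x, hx⟩ := exists_le_ncard_neighborSet_of_starPlusG_isContained hi
      exact absurd (ncard_neighborSet_coneColoring_le hk hM hlt x) (by omega)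
    · exact starPlusG_free_coneColoring (by omega) hk hM hge (hi.mono_right inf_le_right)

end Construction

section GallaiRamsey

variable {α : Type*} {H : SimpleGraph α} {k m M : ℕ}

/-- The complete graph on `Fin M` inside the complete graph with an added vertex. -/
def topCopyAddVertex (M : ℕ) (A : Set (Fin M)) : Copy (⊤ : SimpleGraph (Fin M)) (addVertex M A) :=
  ⟨⟨some, fun {a b} h => .inl ⟨a, b, rfl, rfl, h⟩⟩, Option.some_injective _⟩

theorem addVertex_mono {A B : Set (Fin M)} (h : A ⊆ B) : addVertex M A ≤ addVertex M B := by
  rintro x y (hxy | ⟨a, ha, hxy⟩)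
  · exact .inl hxy
  · exact .inr ⟨a, h ha, hxy⟩

theorem gallaiRamsey_starPlusG (hk : 3 ≤ k) (hm : 3 ≤ m) :
    GallaiRamsey k (starPlusG (2 * m + 2)) = 5 * m + k - 1 := by
  have upper : 5 * m + k - 1 ∈ {N | ∀ c : Fin N → Fin N → Fin k, (∀ x y, c x y = c y x) →
      NoRainbowTriangle ⊤ c → IsMonoCopy ⊤ c (starPlusG (2 * m + 2))} := by
    intro c hs hrainbow
    by_contra hmono
    have hc : IsGoodColoring ⊤ c (starPlusG (2 * m + 2)) := ⟨hs, hrainbow, hmono⟩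
    have hcard := hc.isGallaiColoring.card_add_two_le hm hc.free (K := Finset.univ)
      fun _ _ _ => Finset.mem_univ _
    rw [Nat.card_fin, Finset.card_univ, Fintype.card_fin] at hcard
    omega
  refine le_antisymm (Nat.sInf_le upper) (le_csInf ⟨_, upper⟩ fun N hN => ?_)
  by_contra! hlt
  have hcone := isGoodColoring_coneColoring hk (M := 5 * m + k - 2) (m := m) (by omega)
  have hc := (hcone.comap (topCopyAddVertex _ _)).comap
    (Embedding.completeGraph (Fin.castLEEmb (by omega : N ≤ 5 * m + k - 2))).toCopy
  exact hc.not_isMonoCopy (hN _ hc.symm hc.noRainbowTriangle)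

theorem IsGoodColoring.card_lt_GRstar {A : Finset (Fin M)}
    {c : Option (Fin M) → Option (Fin M) → Fin k} (hc : IsGoodColoring (addVertex M A) c H)
    (hM : GallaiRamsey k H - 1 = M) : A.card < GRstar k H := by
  subst hM
  -- No set `A` has more elements than the host graph has vertices, so the infimum is not over `∅`.
  refine Nat.lt_of_succ_le (le_csInf
    ⟨GallaiRamsey k H - 1 + 1, fun A hA => absurd (card_finset_fin_le A) (by omega)⟩ ?_)
  intro s hs
  by_contra! hle
  obtain ⟨B, hBA, rfl⟩ := Finset.exists_subset_card_eq (Nat.le_of_lt_succ hle)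
  have hB := hc.comap (Copy.ofLE _ _ (addVertex_mono (Finset.coe_subset.2 hBA)))
  exact hB.not_isMonoCopy (hs B rfl _ hB.symm hB.noRainbowTriangle)

end GallaiRamsey

theorem starPlus_star_critical_lower_general (k n : ℕ) (hk : 3 ≤ k) (hn : 8 ≤ n)
    (hne : n % 2 = 0) :
    (∃ A : Finset (Fin (5 * n / 2 + k - 7)), A.card = 2 * n + k - 6 ∧
      ∃ c : Option (Fin (5 * n / 2 + k - 7)) → Option (Fin (5 * n / 2 + k - 7)) → Fin k,
        (∀ x y, c x y = c y x) ∧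
        NoRainbowTriangle (addVertex (5 * n / 2 + k - 7) (↑A)) c ∧
        ¬ IsMonoCopy (addVertex (5 * n / 2 + k - 7) (↑A)) c (starPlusG n)) ∧
    2 * n + k - 5 ≤ GRstar k (starPlusG n) := by
  obtain ⟨m, rfl⟩ : ∃ m, n = 2 * m + 2 := ⟨n / 2 - 1, by omega⟩
  obtain ⟨M, hM⟩ : ∃ M, 5 * (2 * m + 2) / 2 + k - 7 = M := ⟨_, rfl⟩
  rw [hM]
  have hgood := isGoodColoring_coneColoring hk (M := M) (m := m) (by omega)
  have hcard := card_joinedVertices_add (m := m) (M := M) (by omega)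
  have hGR := gallaiRamsey_starPlusG hk (m := m) (by omega)
  have hlt := hgood.card_lt_GRstar (by omega)
  exact ⟨⟨joinedVertices m M, by omega, _, hgood.symm, hgood.noRainbowTriangle,
    hgood.not_isMonoCopy⟩, by omega⟩

/-- For every `k ≥ 3` and even `n ≥ 12`, the complete graph on `5n/2 + k − 7`
vertices plus an extra vertex joined to exactly `2n + k − 6` of them admits a
rainbow-triangle-free `k`-coloring with no monochromatic copy of `K⁺_{1,n}`;
consequently `GR*_k(K⁺_{1,n}) ≥ 2n + k − 5`. -/
theorem starPlus_star_critical_lower (k n : ℕ) (hk : 3 ≤ k) (hn : 12 ≤ n)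
    (hne : n % 2 = 0) :
    (∃ A : Finset (Fin (5 * n / 2 + k - 7)), A.card = 2 * n + k - 6 ∧
      ∃ c : Option (Fin (5 * n / 2 + k - 7)) → Option (Fin (5 * n / 2 + k - 7)) → Fin k,
        (∀ x y, c x y = c y x) ∧
        NoRainbowTriangle (addVertex (5 * n / 2 + k - 7) (↑A)) c ∧
        ¬ IsMonoCopy (addVertex (5 * n / 2 + k - 7) (↑A)) c (starPlusG n)) ∧
    2 * n + k - 5 ≤ GRstar k (starPlusG n) :=
  starPlus_star_critical_lower_general k n hk (by omega) hne
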